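/- Define φ(N) := √(2 ln N)/(N+1). Then: (i) for every δ with 0 < δ < 1, lim_{N→∞} P_sync(δ φ(N), N) = 0; and (ii) for every δ ≥ 2, lim_{N→∞} P_sync(δ φ(N), N) = 1. In particular, for every fixed γ > 0, lim_{N→∞} P_sync(γ/N, N) = 0, so in the classical 1/N coupling scaling the probability of full synchrony tends to zero. -/

import Mathlib

open Real Matrix Finset MeasureTheory ProbabilityTheory

/-- The Kuramoto interaction vector field `f_i(θ) = Σ_j sin (θ_j - θ_i)`. -/
noncomputable def kuraF (N : ℕ) (θ : Fin N → ℝ) : Fin N → ℝ :=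
  fun i => ∑ j, Real.sin (θ j - θ i)

/-- The Jacobian `J(θ)`: `J_ij = cos (θ_i - θ_j)` off the diagonal and
`J_ii = -Σ_{k ≠ i} cos (θ_k - θ_i)`. -/
noncomputable def Jmat (N : ℕ) (θ : Fin N → ℝ) : Matrix (Fin N) (Fin N) ℝ :=
  Matrix.of fun i j =>
    if i = j then -∑ k ∈ Finset.univ \ {i}, Real.cos (θ k - θ i)
    else Real.cos (θ i - θ j)

/-- The set of frequency samples `ω` for which the (mean-adjusted) Kuramoto system with
coupling `γ` has a stable fully synchronized solution: some `θ` with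
`ω_i - (1/N) Σ_j ω_j + γ f_i(θ) = 0` for all `i` and `J(θ)` negative semidefinite with
one-dimensional kernel. -/
def syncSet (N : ℕ) (γ : ℝ) : Set (Fin N → ℝ) :=
  {ω | ∃ θ : Fin N → ℝ,
    (∀ i, ω i - (∑ j, ω j) / N + γ * kuraF N θ i = 0) ∧
    (-(Jmat N θ)).PosSemidef ∧
    Module.finrank ℝ (LinearMap.ker (Matrix.toLin' (Jmat N θ))) = 1}

/-- `P_sync(γ, N)`: the probability, for `ω` a vector of `N` i.i.d. standard Gaussian
random variables, that the Kuramoto system with coupling `γ` fully synchronizes. -/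
noncomputable def Psync (γ : ℝ) (N : ℕ) : ℝ :=
  ((Measure.pi fun _ : Fin N => gaussianReal 0 1) (syncSet N γ)).toReal

/-- The error function `erf x = (2/√π) ∫_0^x e^{-t²} dt`. -/
noncomputable def erf (x : ℝ) : ℝ :=
  (2 / Real.sqrt Real.pi) * ∫ t in (0 : ℝ)..x, Real.exp (-t ^ 2)

/-- The critical coupling scale `φ(N) = √(2 ln N) / (N + 1)`. -/
noncomputable def phi (N : ℕ) : ℝ := Real.sqrt (2 * Real.log N) / (N + 1)


theorem kuraF_eq (N : ℕ) (θ : Fin N → ℝ) (hs : ∑ j, Real.sin (θ j) = 0) (i : Fin N) :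
    kuraF N θ i = -((∑ j, Real.cos (θ j)) * Real.sin (θ i)) := by
  simp only [kuraF, Real.sin_sub, Finset.sum_sub_distrib, ← Finset.sum_mul, hs]
  ring

theorem Jmat_mulVec (N : ℕ) (θ : Fin N → ℝ) (hs : ∑ j, Real.sin (θ j) = 0)
    (x : Fin N → ℝ) (i : Fin N) :
    (Jmat N θ *ᵥ x) i = Real.cos (θ i) * (∑ j, Real.cos (θ j) * x j) +
      Real.sin (θ i) * (∑ j, Real.sin (θ j) * x j) -
      (∑ j, Real.cos (θ j)) * Real.cos (θ i) * x i := by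
  have hd : ∑ k ∈ Finset.univ \ {i}, Real.cos (θ k - θ i) =
      (∑ j, Real.cos (θ j)) * Real.cos (θ i) - 1 := by
    have h := Finset.sum_sdiff_eq_sub (Finset.subset_univ {i})
      (f := fun k => Real.cos (θ k - θ i))
    rw [h]
    simp [Real.cos_sub, Finset.sum_add_distrib, ← Finset.sum_mul, hs]
    nlinarith [Real.sin_sq_add_cos_sq (θ i)]
  have hJ : ∀ j, Jmat N θ i j = Real.cos (θ i) * Real.cos (θ j) +
      Real.sin (θ i) * Real.sin (θ j) -
      if i = j then (∑ j, Real.cos (θ j)) * Real.cos (θ i) else 0 := by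
    intro j
    by_cases h : i = j
    · subst h
      simp only [Jmat, Matrix.of_apply, if_true, hd]
      nlinarith [Real.sin_sq_add_cos_sq (θ i)]
    · simp [Jmat, h, Real.cos_sub]
  simp only [Matrix.mulVec, dotProduct, hJ, sub_mul, add_mul, Finset.sum_sub_distrib,
    Finset.sum_add_distrib, ite_mul, zero_mul, Finset.sum_ite_eq, Finset.mem_univ, if_true,
    Finset.mul_sum, mul_assoc]

theorem Jmat_isHermitian (N : ℕ) (θ : Fin N → ℝ) : (Jmat N θ).IsHermitian := by
  ext i j
  by_cases h : i = j
  · subst h; simp [Jmat]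
  · simp only [Jmat, Matrix.conjTranspose_apply, Matrix.of_apply, h, Ne.symm h, if_false,
      star_trivial]
    rw [← Real.cos_neg, neg_sub]

theorem Jmat_neg_posSemidef (N : ℕ) (θ : Fin N → ℝ) (hs : ∑ j, Real.sin (θ j) = 0)
    (hc : ∀ i, 0 < Real.cos (θ i))
    (hst : ∑ i, Real.sin (θ i) ^ 2 / Real.cos (θ i) < ∑ i, Real.cos (θ i)) :
    (-(Jmat N θ)).PosSemidef := by
  refine Matrix.PosSemidef.of_dotProduct_mulVec_nonneg (Jmat_isHermitian N θ).neg fun x => ?_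
  have hT : 0 ≤ ∑ i, Real.sin (θ i) ^ 2 / Real.cos (θ i) :=
    Finset.sum_nonneg fun i _ => div_nonneg (sq_nonneg _) (hc i).le
  set S := ∑ i, Real.cos (θ i) with hS
  have hSpos : 0 < S := hT.trans_lt hst
  set p := ∑ j, Real.cos (θ j) * x j with hp
  set q := ∑ j, Real.sin (θ j) * x j with hq
  set α := p / S with hα
  have hαS : α * S = p := div_mul_cancel₀ _ hSpos.ne'
  have key : q ^ 2 ≤ (∑ i, Real.sin (θ i) ^ 2 / Real.cos (θ i)) *
      ∑ i, Real.cos (θ i) * (x i - α) ^ 2 := by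
    have : q = ∑ i, Real.sin (θ i) * (x i - α) := by
      simp [mul_sub, Finset.sum_sub_distrib, ← Finset.sum_mul, hs, hq]
    rw [this]
    refine Finset.sum_sq_le_sum_mul_sum_of_sq_le_mul _
      (fun i _ => div_nonneg (sq_nonneg _) (hc i).le)
      (fun i _ => mul_nonneg (hc i).le (sq_nonneg _)) fun i _ => ?_
    have := (hc i).ne'
    exact le_of_eq (by field_simp)
  have hz : ∑ i, Real.cos (θ i) * (x i - α) ^ 2 =
      (∑ i, Real.cos (θ i) * x i ^ 2) - 2 * α * p + α ^ 2 * S := by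
    rw [hp, hS, Finset.mul_sum, Finset.mul_sum, ← Finset.sum_sub_distrib,
      ← Finset.sum_add_distrib]
    exact Finset.sum_congr rfl fun i _ => by ring
  have hz0 : 0 ≤ ∑ i, Real.cos (θ i) * (x i - α) ^ 2 :=
    Finset.sum_nonneg fun i _ => mul_nonneg (hc i).le (sq_nonneg _)
  have hquad : star x ⬝ᵥ (-(Jmat N θ)) *ᵥ x =
      S * (∑ i, Real.cos (θ i) * x i ^ 2) - p ^ 2 - q ^ 2 := by
    simp only [dotProduct, Matrix.neg_mulVec, Pi.neg_apply, Jmat_mulVec N θ hs, Pi.star_apply,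
      star_trivial, ← hp, ← hq, ← hS]
    calc _ = ∑ i, (S * (Real.cos (θ i) * x i ^ 2) - p * (Real.cos (θ i) * x i) -
          q * (Real.sin (θ i) * x i)) := Finset.sum_congr rfl fun i _ => by ring
      _ = _ := by
        rw [Finset.sum_sub_distrib, Finset.sum_sub_distrib, ← Finset.mul_sum, ← Finset.mul_sum,
          ← Finset.mul_sum, ← hp, ← hq]
        ring
  rw [hquad]
  have h1 := mul_le_mul_of_nonneg_right hst.le hz0
  rw [hz] at h1 key
  have h2 : S * ((∑ i, Real.cos (θ i) * x i ^ 2) - 2 * α * p + α ^ 2 * S) =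
      S * (∑ i, Real.cos (θ i) * x i ^ 2) - p ^ 2 := by
    rw [← hαS]; ring
  linarith

theorem Jmat_finrank_ker (N : ℕ) (θ : Fin N → ℝ) (hs : ∑ j, Real.sin (θ j) = 0)
    (hc : ∀ i, 0 < Real.cos (θ i))
    (hst : ∑ i, Real.sin (θ i) ^ 2 / Real.cos (θ i) < ∑ i, Real.cos (θ i)) :
    Module.finrank ℝ (LinearMap.ker (Matrix.toLin' (Jmat N θ))) = 1 := by
  have hT : 0 ≤ ∑ i, Real.sin (θ i) ^ 2 / Real.cos (θ i) :=
    Finset.sum_nonneg fun i _ => div_nonneg (sq_nonneg _) (hc i).le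
  have hSpos := hT.trans_lt hst
  have hN : Nonempty (Fin N) := by
    by_contra h
    rw [not_nonempty_iff] at h
    simp at hSpos
  have hker : LinearMap.ker (Matrix.toLin' (Jmat N θ)) =
      Submodule.span ℝ {fun _ : Fin N => (1 : ℝ)} := by
    ext x
    rw [LinearMap.mem_ker, Matrix.toLin'_apply, Submodule.mem_span_singleton]
    set S := ∑ i, Real.cos (θ i) with hS
    constructor
    · intro h
      set p := ∑ j, Real.cos (θ j) * x j with hp
      set q := ∑ j, Real.sin (θ j) * x j with hq
      have hx : ∀ i, S * x i = p + Real.sin (θ i) / Real.cos (θ i) * q := by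
        intro i
        have h0 := congrFun h i
        rw [Jmat_mulVec N θ hs, ← hp, ← hq, ← hS, Pi.zero_apply] at h0
        have := (hc i).ne'
        field_simp
        linarith
      have hqq : S * q = (∑ i, Real.sin (θ i) ^ 2 / Real.cos (θ i)) * q := by
        calc S * q = ∑ i, Real.sin (θ i) * (S * x i) := by
              rw [hq, Finset.mul_sum]; exact Finset.sum_congr rfl fun i _ => by ring
          _ = ∑ i, (Real.sin (θ i) * p + Real.sin (θ i) ^ 2 / Real.cos (θ i) * q) :=
              Finset.sum_congr rfl fun i _ => by rw [hx]; ring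
          _ = _ := by rw [Finset.sum_add_distrib, ← Finset.sum_mul, ← Finset.sum_mul, hs]; ring
      have hq0 : q = 0 := by
        by_contra hne
        exact hst.ne' (mul_right_cancel₀ hne hqq)
      refine ⟨p / S, funext fun i => ?_⟩
      have := hx i
      simp only [Pi.smul_apply, smul_eq_mul, mul_one]
      rw [div_eq_iff hSpos.ne']
      rw [hq0] at this
      linarith
    · rintro ⟨a, rfl⟩
      ext i
      rw [Jmat_mulVec N θ hs]
      simp only [Pi.smul_apply, smul_eq_mul, mul_one, ← Finset.sum_mul, hs, Pi.zero_apply]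
      ring
  rw [hker]
  refine finrank_span_singleton fun h => ?_
  exact one_ne_zero (congrFun h hN.some)

theorem chord_sq_lt {a b w : ℝ} (ha : 0 < a) (hb : 0 < b) (hwa : -a < w) (hwb : w < b) :
    (a + (b - w) * (b - a) / (a + b)) ^ 2 < a ^ 2 + b ^ 2 - w ^ 2 := by
  have hab : 0 < a + b := by positivity
  have h : a ^ 2 + b ^ 2 - w ^ 2 - (a + (b - w) * (b - a) / (a + b)) ^ 2 =
      2 * (a ^ 2 + b ^ 2) / (a + b) ^ 2 * ((b - w) * (w + a)) := by
    field_simp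
    ring
  have : 0 < 2 * (a ^ 2 + b ^ 2) / (a + b) ^ 2 * ((b - w) * (w + a)) :=
    mul_pos (by positivity) (mul_pos (by linarith) (by linarith))
  linarith

theorem sqrt_le_tangent {x y : ℝ} (hx : 0 ≤ x) (hy : 0 < y) :
    √x ≤ √y + (x - y) / 2 * (1 / √y) := by
  have hs := Real.sqrt_pos.2 hy
  have h1 := Real.sq_sqrt hx
  have h2 := Real.sq_sqrt hy.le
  have h : √y + (x - y) / 2 * (1 / √y) - √x = (√x - √y) ^ 2 / (2 * √y) := by
    field_simp
    nlinarith
  have : 0 ≤ (√x - √y) ^ 2 / (2 * √y) := by positivity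
  linarith

/-- The mean-field self-consistency equation `v / γ = ∑ √(v - wᵢ²)` has a solution at which its
right-hand side grows more slowly than its left-hand side, provided the frequencies `w` lie
strictly inside an interval of length at most `γ N`. -/
theorem exists_stable_root {N : ℕ} (w : Fin N → ℝ) {a b γ : ℝ} (ha : 0 < a) (hb : 0 < b)
    (hγ : 0 < γ) (hN : 0 < N) (hab : a + b ≤ γ * N) (hwa : ∀ i, -a < w i) (hwb : ∀ i, w i < b)
    (hw : ∑ i, w i = 0) :
    ∃ v : ℝ, (∀ i, w i ^ 2 < v) ∧ ∑ i, √(v - w i ^ 2) = v / γ ∧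
      ∑ i, 1 / √(v - w i ^ 2) < 2 / γ := by
  have hNe : Nonempty (Fin N) := ⟨⟨0, hN⟩⟩
  have hN' : (0 : ℝ) < N := by exact_mod_cast hN
  set v₀ := a ^ 2 + b ^ 2 with hv₀
  have hv₀pos : 0 < v₀ := by positivity
  have hlt : ∀ i, w i ^ 2 < v₀ := fun i => by
    have := chord_sq_lt ha hb (hwa i) (hwb i)
    nlinarith [sq_nonneg (a + (b - w i) * (b - a) / (a + b))]
  have hG0 : v₀ / γ < ∑ i, √(v₀ - w i ^ 2) := by
    have h1 : ∑ i, (a + (b - w i) * (b - a) / (a + b)) < ∑ i, √(v₀ - w i ^ 2) :=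
      Finset.sum_lt_sum_of_nonempty Finset.univ_nonempty fun i _ =>
        Real.lt_sqrt_of_sq_lt (chord_sq_lt ha hb (hwa i) (hwb i))
    have h2 : ∑ i, (a + (b - w i) * (b - a) / (a + b)) = N * (v₀ / (a + b)) := by
      rw [Finset.sum_add_distrib, ← Finset.sum_div, ← Finset.sum_mul, Finset.sum_sub_distrib, hw]
      simp
      field_simp
      ring
    have h3 : v₀ / γ ≤ N * (v₀ / (a + b)) := by
      rw [← mul_div_assoc, div_le_div_iff₀ hγ (by positivity)]
      nlinarith
    linarith
  set V := v₀ + (N * γ) ^ 2 with hV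
  have hGV : ∑ i, √(V - w i ^ 2) ≤ V / γ := by
    have h1 : ∑ i, √(V - w i ^ 2) ≤ ∑ _i : Fin N, √V :=
      Finset.sum_le_sum fun i _ => Real.sqrt_le_sqrt (by nlinarith [sq_nonneg (w i)])
    have h2 : N * γ ≤ √V := Real.le_sqrt_of_sq_le (by linarith)
    have h3 : √V * √V = V := Real.mul_self_sqrt (by positivity)
    refine h1.trans ?_
    rw [Finset.sum_const, Finset.card_univ, Fintype.card_fin, nsmul_eq_mul, le_div_iff₀ hγ]
    nlinarith [Real.sqrt_nonneg V]
  have hcont : ContinuousOn (fun v => ∑ i, √(v - w i ^ 2) - v / γ) (Set.Icc v₀ V) := by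
    fun_prop
  have hle : v₀ ≤ V := by have := sq_nonneg (N * γ); linarith
  obtain ⟨v, ⟨hv1, -⟩, hv⟩ := intermediate_value_Icc' hle hcont
    (show (0 : ℝ) ∈ Set.Icc _ _ from ⟨by simpa using hGV, by simpa using hG0.le⟩)
  have hv : ∑ i, √(v - w i ^ 2) = v / γ := by simpa [sub_eq_zero] using hv
  have hv1 : v₀ < v := by
    refine lt_of_le_of_ne hv1 fun h => ?_
    rw [← h] at hv
    exact hG0.ne' hv
  refine ⟨v, fun i => (hlt i).trans hv1, hv, ?_⟩
  have h1 : ∑ i, √(v₀ - w i ^ 2) ≤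
      ∑ i, (√(v - w i ^ 2) + (v₀ - v) / 2 * (1 / √(v - w i ^ 2))) :=
    Finset.sum_le_sum fun i _ => by
      have := sqrt_le_tangent (sub_nonneg.2 (hlt i).le) (sub_pos.2 ((hlt i).trans hv1))
      simpa using this
  rw [Finset.sum_add_distrib, hv, ← Finset.mul_sum] at h1
  have h2 : v / γ - v₀ / γ = (v - v₀) / 2 * (2 / γ) := by field_simp
  have h3 : (v - v₀) / 2 * (∑ i, 1 / √(v - w i ^ 2)) < (v - v₀) / 2 * (2 / γ) := by
    have : (v₀ - v) / 2 * (∑ i, 1 / √(v - w i ^ 2)) =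
      -((v - v₀) / 2 * (∑ i, 1 / √(v - w i ^ 2))) := by ring
    linarith
  exact lt_of_mul_lt_mul_left h3 (by linarith)

theorem mem_syncSet_of_abs_lt {N : ℕ} {γ A : ℝ} {ω : Fin N → ℝ} (hN : 0 < N) (hγ : 0 < γ)
    (hA : 2 * A ≤ γ * N) (hω : ∀ i, |ω i| < A) : ω ∈ syncSet N γ := by
  have hNe : Nonempty (Fin N) := ⟨⟨0, hN⟩⟩
  have hN' : (0 : ℝ) < N := by exact_mod_cast hN
  set m := (∑ j, ω j) / N with hm
  have hsum : ∑ j, ω j = N * m := by rw [hm]; field_simp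
  have hmA : m < A := by
    have h : ∑ j, ω j < ∑ _j : Fin N, A :=
      Finset.sum_lt_sum_of_nonempty Finset.univ_nonempty fun i _ => (abs_lt.1 (hω i)).2
    rw [hsum] at h
    simp at h
    exact lt_of_mul_lt_mul_left h hN'.le
  have hmA' : -A < m := by
    have h : ∑ _j : Fin N, -A < ∑ j, ω j :=
      Finset.sum_lt_sum_of_nonempty Finset.univ_nonempty fun i _ => (abs_lt.1 (hω i)).1
    rw [hsum, Finset.sum_const, Finset.card_univ, Fintype.card_fin, nsmul_eq_mul] at h
    exact lt_of_mul_lt_mul_left h hN'.le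
  have hw0 : ∑ i, (ω i - m) = 0 := by simp [Finset.sum_sub_distrib, hsum]
  obtain ⟨v, hwv, hv, hst⟩ := exists_stable_root (fun i => ω i - m) (a := A + m) (b := A - m)
    (by linarith) (by linarith) hγ hN (by linarith)
    (fun i => by have := (abs_lt.1 (hω i)).1; linarith)
    (fun i => by have := (abs_lt.1 (hω i)).2; linarith) hw0
  have hvpos : 0 < v := (sq_nonneg _).trans_lt (hwv hNe.some)
  set u := √v with hu
  have hupos : 0 < u := Real.sqrt_pos.2 hvpos
  have huv : u ^ 2 = v := Real.sq_sqrt hvpos.le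
  set θ : Fin N → ℝ := fun i => Real.arcsin ((ω i - m) / u) with hθ
  have hsq : ∀ i, ((ω i - m) / u) ^ 2 < 1 := fun i => by
    rw [div_pow, huv, div_lt_one hvpos]
    exact hwv i
  have hsin : ∀ i, Real.sin (θ i) = (ω i - m) / u := fun i => by
    have h := abs_lt.1 (sq_lt_one_iff_abs_lt_one _ |>.1 (hsq i))
    exact Real.sin_arcsin h.1.le h.2.le
  have hcos : ∀ i, Real.cos (θ i) = √(v - (ω i - m) ^ 2) / u := fun i => by
    rw [hθ, Real.cos_arcsin, hu, ← Real.sqrt_div (sub_nonneg.2 (hwv i).le), ← hu, div_pow, huv]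
    congr 1
    field_simp
  have hr : ∀ i, 0 < √(v - (ω i - m) ^ 2) := fun i => Real.sqrt_pos.2 (sub_pos.2 (hwv i))
  have hcpos : ∀ i, 0 < Real.cos (θ i) := fun i => by
    rw [hcos]
    exact div_pos (hr i) hupos
  have hs : ∑ i, Real.sin (θ i) = 0 := by
    simp_rw [hsin]
    rw [← Finset.sum_div, hw0, zero_div]
  have hS : ∑ i, Real.cos (θ i) = u / γ := by
    simp_rw [hcos]
    rw [← Finset.sum_div, hv, ← huv]
    field_simp
  have hT : ∑ i, Real.sin (θ i) ^ 2 / Real.cos (θ i) < ∑ i, Real.cos (θ i) := by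
    have h1 : ∑ i, Real.sin (θ i) ^ 2 / Real.cos (θ i) =
        u * (∑ i, 1 / √(v - (ω i - m) ^ 2)) - ∑ i, Real.cos (θ i) := by
      rw [Finset.mul_sum, ← Finset.sum_sub_distrib]
      refine Finset.sum_congr rfl fun i _ => ?_
      have hne := (hcpos i).ne'
      have h2 : u * (1 / √(v - (ω i - m) ^ 2)) = 1 / Real.cos (θ i) := by
        rw [hcos, one_div_div]; ring
      rw [h2, Real.sin_sq]
      field_simp
    rw [h1, hS]
    have := mul_lt_mul_of_pos_left hst hupos
    have h3 : u * (2 / γ) = u / γ + u / γ := by ring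
    linarith
  refine ⟨θ, fun i => ?_, Jmat_neg_posSemidef N θ hs hcpos hT, Jmat_finrank_ker N θ hs hcpos hT⟩
  rw [kuraF_eq N θ hs, hS, hsin, ← hm]
  field_simp
  ring

theorem sub_mean_le_of_mem_syncSet {N : ℕ} {γ : ℝ} {ω : Fin N → ℝ} (hγ : 0 ≤ γ)
    (hω : ω ∈ syncSet N γ) (i : Fin N) : ω i ≤ (∑ j, ω j) / N + γ * N := by
  obtain ⟨θ, h, -⟩ := hω
  have h1 : -(N : ℝ) ≤ kuraF N θ i := by
    calc -(N : ℝ) = ∑ _j : Fin N, (-1 : ℝ) := by simp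
      _ ≤ _ := Finset.sum_le_sum fun j _ => Real.neg_one_le_sin _
  have := mul_le_mul_of_nonneg_left h1 hγ
  linarith [h i]

theorem gaussianPDFReal_std (x : ℝ) :
    gaussianPDFReal 0 1 x = (√(2 * π))⁻¹ * Real.exp (-x ^ 2 / 2) := by
  simp [gaussianPDFReal_def]

theorem gaussianReal_real_eq_integral (s : Set ℝ) :
    (gaussianReal 0 1).real s = ∫ x in s, gaussianPDFReal 0 1 x := by
  rw [measureReal_def, gaussianReal_apply_eq_integral 0 one_ne_zero,
    ENNReal.toReal_ofReal (integral_nonneg fun x => gaussianPDFReal_nonneg _ _ _)]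

theorem gaussianReal_Ioi_le {A : ℝ} (hA : 0 < A) :
    (gaussianReal 0 1).real (Set.Ioi A) ≤ Real.exp (-A ^ 2 / 2) / A := by
  rw [gaussianReal_real_eq_integral]
  have hneg : -A < 0 := by linarith
  have hint := (integrableOn_exp_mul_Ioi hneg A).const_mul (Real.exp (A ^ 2 / 2))
  calc ∫ x in Set.Ioi A, gaussianPDFReal 0 1 x
      ≤ ∫ x in Set.Ioi A, Real.exp (A ^ 2 / 2) * Real.exp (-A * x) := by
        refine setIntegral_mono_on (integrable_gaussianPDFReal 0 1).integrableOn hint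
          measurableSet_Ioi fun x _ => ?_
        rw [gaussianPDFReal_std, ← Real.exp_add]
        have h1 : (√(2 * π))⁻¹ ≤ 1 := by
          refine inv_le_one_of_one_le₀ (Real.one_le_sqrt.2 ?_)
          linarith [Real.pi_gt_three]
        calc _ ≤ 1 * Real.exp (-x ^ 2 / 2) := by gcongr
          _ ≤ _ := by
            rw [one_mul]
            refine Real.exp_le_exp.2 ?_
            nlinarith [sq_nonneg (x - A)]
    _ = Real.exp (-A ^ 2 / 2) / A := by
        rw [integral_const_mul, integral_exp_mul_Ioi hneg, neg_div_neg_eq, ← mul_div_assoc,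
          ← Real.exp_add]
        congr 2
        ring

theorem le_gaussianReal_Ioi {B : ℝ} (hB : 0 ≤ B) :
    (√(2 * π))⁻¹ * Real.exp (-(B + 1) ^ 2 / 2) ≤ (gaussianReal 0 1).real (Set.Ioi B) := by
  calc (√(2 * π))⁻¹ * Real.exp (-(B + 1) ^ 2 / 2)
      = ∫ _x in Set.Ioc B (B + 1), (√(2 * π))⁻¹ * Real.exp (-(B + 1) ^ 2 / 2) := by simp
    _ ≤ ∫ x in Set.Ioc B (B + 1), gaussianPDFReal 0 1 x := by
        refine setIntegral_mono_on (integrable_const _) (integrable_gaussianPDFReal 0 1).integrableOn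
          measurableSet_Ioc fun x hx => ?_
        rw [gaussianPDFReal_std]
        have : x ^ 2 ≤ (B + 1) ^ 2 := pow_le_pow_left₀ (hB.trans hx.1.le) hx.2 2
        gcongr
    _ = (gaussianReal 0 1).real (Set.Ioc B (B + 1)) := (gaussianReal_real_eq_integral _).symm
    _ ≤ _ := measureReal_mono Set.Ioc_subset_Ioi_self

theorem gaussianReal_Iio_neg (A : ℝ) :
    (gaussianReal 0 1).real (Set.Iio (-A)) = (gaussianReal 0 1).real (Set.Ioi A) := by
  have h : (gaussianReal 0 1).map (fun x => -x) = gaussianReal 0 1 := by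
    simp [gaussianReal_map_neg]
  rw [← h, map_measureReal_apply (by fun_prop) measurableSet_Iio, h]
  simp

theorem gaussianReal_Ioo_neg_ge {A : ℝ} (hA : 0 < A) :
    1 - 2 * (Real.exp (-A ^ 2 / 2) / A) ≤ (gaussianReal 0 1).real (Set.Ioo (-A) A) := by
  have h := probReal_compl_eq_one_sub (μ := gaussianReal 0 1) (measurableSet_Icc (a := -A) (b := A))
  have h2 : (Set.Icc (-A) A)ᶜ = Set.Iio (-A) ∪ Set.Ioi A := by
    ext x; simp only [Set.mem_compl_iff, Set.mem_Icc, Set.mem_union, Set.mem_Iio, Set.mem_Ioi,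
      not_and_or, not_le]
  have h3 := measureReal_union_le (μ := gaussianReal 0 1) (Set.Iio (-A)) (Set.Ioi A)
  have h4 : (gaussianReal 0 1).real (Set.Ioo (-A) A) = (gaussianReal 0 1).real (Set.Icc (-A) A) := by
    have := nullSingletonClass_gaussianReal (μ := 0) (v := 1) one_ne_zero
    exact measureReal_congr Ioo_ae_eq_Icc
  rw [← h2, h, gaussianReal_Iio_neg] at h3
  linarith [gaussianReal_Ioi_le hA]

theorem pi_real_univ_pi (N : ℕ) (s : Set ℝ) :
    (Measure.pi fun _ : Fin N => gaussianReal 0 1).real (Set.univ.pi fun _ => s) =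
      (gaussianReal 0 1).real s ^ N := by
  simp [measureReal_def, Measure.pi_pi]

theorem Psync_eq_real (γ : ℝ) (N : ℕ) :
    Psync γ N = (Measure.pi fun _ : Fin N => gaussianReal 0 1).real (syncSet N γ) := rfl

theorem Psync_nonneg (γ : ℝ) (N : ℕ) : 0 ≤ Psync γ N := ENNReal.toReal_nonneg

theorem Psync_le_one (γ : ℝ) (N : ℕ) : Psync γ N ≤ 1 := by
  rw [Psync_eq_real]
  exact measureReal_le_one

theorem Psync_ge {N : ℕ} {γ A : ℝ} (hN : 0 < N) (hγ : 0 < γ) (hA0 : 0 < A)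
    (hA : 2 * A ≤ γ * N) : 1 - N * (2 * (Real.exp (-A ^ 2 / 2) / A)) ≤ Psync γ N := by
  have hsub : (Set.univ.pi fun _ : Fin N => Set.Ioo (-A) A) ⊆ syncSet N γ := fun ω hω =>
    mem_syncSet_of_abs_lt hN hγ hA fun i => abs_lt.2 (hω i (Set.mem_univ i))
  have h1 := measureReal_mono (μ := Measure.pi fun _ : Fin N => gaussianReal 0 1) hsub
  rw [pi_real_univ_pi, ← Psync_eq_real] at h1
  refine le_trans ?_ h1
  set g := (gaussianReal 0 1).real (Set.Ioo (-A) A)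
  have h2 := gaussianReal_Ioo_neg_ge hA0
  have h3 : 0 ≤ g := measureReal_nonneg
  have h4 := one_add_mul_le_pow (a := g - 1) (by linarith) N
  have h5 : 1 + (g - 1) = g := by ring
  rw [h5] at h4
  have h6 := mul_le_mul_of_nonneg_left h2 (Nat.cast_nonneg (α := ℝ) N)
  linarith

theorem pi_real_mean_ge_one_le {N : ℕ} (hN : 0 < N) :
    (Measure.pi fun _ : Fin N => gaussianReal 0 1).real {ω | 1 ≤ (∑ j, ω j) / N} ≤ 1 / N := by
  have hN' : (0 : ℝ) < N := by exact_mod_cast hN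
  set P := Measure.pi fun _ : Fin N => gaussianReal 0 1
  set X : (Fin N → ℝ) → ℝ := ∑ i : Fin N, fun ω => id (ω i) with hX
  have hXa : ∀ ω, X ω = ∑ j, ω j := fun ω => by simp [hX, Finset.sum_apply]
  have hLp : ∀ i : Fin N, MemLp (fun ω : Fin N → ℝ => id (ω i)) 2 P := fun i =>
    (memLp_id_gaussianReal 2).comp_measurePreserving (measurePreserving_eval _ i)
  have hXLp : MemLp X 2 P := memLp_finsetSum' _ fun i _ => hLp i
  have hvar : variance X P = N := by
    have := variance_sum_pi (μ := fun _ : Fin N => gaussianReal 0 1) (X := fun _ => id)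
      fun _ => memLp_id_gaussianReal 2
    rw [hX, this]
    simp [variance_id_gaussianReal]
  have hmean : ∫ ω, X ω ∂P = 0 := by
    simp_rw [hXa]
    rw [integral_finsetSum _ fun i _ =>
      show Integrable (fun ω : Fin N → ℝ => ω i) P from (hLp i).integrable (by norm_num)]
    refine Finset.sum_eq_zero fun i _ => ?_
    rw [integral_eval]
    simp
  have h := meas_ge_le_variance_div_sq hXLp hN'
  rw [hmean, hvar] at h
  have h2 : P.real {ω | (N : ℝ) ≤ |X ω - 0|} ≤ 1 / N := by
    refine ENNReal.toReal_le_of_le_ofReal (by positivity) (h.trans_eq ?_)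
    congr 1
    field_simp
  refine (measureReal_mono fun ω hω => ?_).trans h2
  simp only [Set.mem_ofPred_eq, one_le_div hN', sub_zero, hXa] at hω ⊢
  exact hω.trans (le_abs_self _)

theorem Psync_le {N : ℕ} {γ B : ℝ} (hN : 0 < N) (hγ : 0 ≤ γ) (hB0 : 0 ≤ B) (hB : γ * N ≤ B) :
    Psync γ N ≤ 1 / N +
      Real.exp (-(N * ((√(2 * π))⁻¹ * Real.exp (-(B + 2) ^ 2 / 2)))) := by
  have hsub : syncSet N γ ⊆ {ω | 1 ≤ (∑ j, ω j) / N} ∪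
      (Set.univ.pi fun _ : Fin N => Set.Iic (B + 1)) := by
    intro ω hω
    by_cases h : 1 ≤ (∑ j, ω j) / N
    · exact Or.inl h
    · refine Or.inr fun i _ => ?_
      have := sub_mean_le_of_mem_syncSet hγ hω i
      push Not at h
      simp only [Set.mem_Iic]
      linarith
  rw [Psync_eq_real]
  refine (measureReal_mono hsub).trans ((measureReal_union_le _ _).trans
    (add_le_add (pi_real_mean_ge_one_le hN) ?_))
  rw [pi_real_univ_pi]
  have h1 := probReal_compl_eq_one_sub (μ := gaussianReal 0 1) (measurableSet_Ioi (a := B + 1))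
  rw [Set.compl_Ioi] at h1
  have h2 := le_gaussianReal_Ioi (B := B + 1) (by linarith)
  rw [show B + 1 + 1 = B + 2 by ring] at h2
  set q := (√(2 * π))⁻¹ * Real.exp (-(B + 2) ^ 2 / 2)
  have h3 : (gaussianReal 0 1).real (Set.Iic (B + 1)) ≤ Real.exp (-q) := by
    have := Real.add_one_le_exp (-q)
    linarith
  calc _ ≤ Real.exp (-q) ^ N := pow_le_pow_left₀ measureReal_nonneg h3 N
    _ = _ := by rw [← Real.exp_nat_mul]; congr 1; ring

theorem tendsto_sqrt_two_log_atTop :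
    Filter.Tendsto (fun N : ℕ => √(2 * Real.log N)) Filter.atTop Filter.atTop :=
  Real.tendsto_sqrt_atTop.comp
    ((Real.tendsto_log_atTop.comp tendsto_natCast_atTop_atTop).const_mul_atTop two_pos)

theorem sq_sqrt_two_log (N : ℕ) : √(2 * Real.log N) ^ 2 = 2 * Real.log N :=
  Real.sq_sqrt (mul_nonneg two_pos.le (Real.log_natCast_nonneg N))

/-- Synchronization has vanishing probability if `γ N` stays below `δ √(2 ln N)`, `δ < 1`. -/
theorem tendsto_Psync_zero {δ : ℝ} (hδ0 : 0 < δ) (hδ1 : δ < 1) {g : ℕ → ℝ}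
    (hg0 : ∀ N, 0 ≤ g N) (hg : ∀ᶠ N : ℕ in Filter.atTop, g N * N ≤ δ * √(2 * Real.log N)) :
    Filter.Tendsto (fun N => Psync (g N) N) Filter.atTop (nhds 0) := by
  have hr := tendsto_sqrt_two_log_atTop
  set r : ℕ → ℝ := fun N => √(2 * Real.log N) with hrdef
  have hexp : Filter.Tendsto
      (fun N => ((1 - δ) * r N - 2) * (((1 + δ) * r N + 2) / 2)) Filter.atTop Filter.atTop := by
    refine Filter.Tendsto.atTop_mul_atTop₀ ?_ ?_
    · exact Filter.tendsto_atTop_add_const_right _ _ (hr.const_mul_atTop (by linarith))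
    · exact (Filter.tendsto_atTop_add_const_right _ _
        (hr.const_mul_atTop (by linarith))).atTop_div_const two_pos
  have hc : 0 < (√(2 * π))⁻¹ := by positivity
  have hlim := tendsto_one_div_atTop_nhds_zero_nat.add
    (Real.tendsto_exp_neg_atTop_nhds_zero.comp
      ((Real.tendsto_exp_atTop.comp hexp).const_mul_atTop hc))
  rw [add_zero] at hlim
  refine squeeze_zero' (Filter.Eventually.of_forall fun N => Psync_nonneg _ _) ?_ hlim
  filter_upwards [hg, Filter.eventually_gt_atTop 0] with N hN hpos
  have hN' : (0 : ℝ) < N := by exact_mod_cast hpos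
  refine (Psync_le hpos (hg0 N) (by positivity) hN).trans_eq ?_
  simp only [Function.comp]
  congr 3
  rw [mul_left_comm]
  congr 1
  have h : (N : ℝ) = Real.exp (r N ^ 2 / 2) := by
    rw [hrdef]
    simp only [sq_sqrt_two_log]
    rw [mul_div_cancel_left₀ _ two_ne_zero, Real.exp_log hN']
  rw [h, ← Real.exp_add, ← h]
  congr 1
  simp only [hrdef]
  ring

theorem phi_mul (N : ℕ) : phi N * N = √(2 * Real.log N) * (N / (N + 1)) := by
  rw [phi]; ring

theorem phi_nonneg (N : ℕ) : 0 ≤ phi N := by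
  rw [phi]; positivity

theorem phi_mul_le (N : ℕ) : phi N * N ≤ √(2 * Real.log N) := by
  rw [phi_mul]
  refine mul_le_of_le_one_right (Real.sqrt_nonneg _) ?_
  rw [div_le_one (by positivity)]
  linarith

theorem Psync_phi_ge {N : ℕ} (hN : 2 ≤ N) {δ : ℝ} (hδ : 2 ≤ δ) :
    1 - 4 * Real.exp 2 / √(2 * Real.log N) ≤ Psync (δ * phi N) N := by
  have hN2 : (2 : ℝ) ≤ N := by exact_mod_cast hN
  have hlog : 0 < Real.log N := Real.log_pos (by linarith)
  have hr2 := sq_sqrt_two_log N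
  have hr : 0 < √(2 * Real.log N) := Real.sqrt_pos.2 (by linarith)
  have hphi : 0 < phi N := by rw [phi]; positivity
  have hA : 0 < phi N * N := by positivity
  refine le_trans ?_ (Psync_ge (A := phi N * N) (by linarith) (by positivity) hA
    (by nlinarith))
  have hhalf : √(2 * Real.log N) / 2 ≤ phi N * N := by
    rw [phi_mul, div_eq_mul_inv]
    gcongr
    rw [inv_eq_one_div, div_le_div_iff₀ two_pos (by positivity)]
    linarith
  have hexp : Real.exp (-(phi N * N) ^ 2 / 2) ≤ Real.exp 2 / N := by
    rw [le_div_iff₀ (by linarith)]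
    nth_rw 2 [← Real.exp_log (show (0 : ℝ) < N by linarith)]
    rw [← Real.exp_add, Real.exp_le_exp, phi_mul, mul_pow, hr2]
    have h1 : Real.log N ≤ N := (Real.log_le_sub_one_of_pos (by linarith)).trans (by linarith)
    have h2 : -(2 * Real.log N * ((N : ℝ) / (N + 1)) ^ 2) / 2 + Real.log N =
        Real.log N * (2 * N + 1) / (N + 1) ^ 2 := by
      field_simp
      ring
    rw [h2, div_le_iff₀ (by positivity)]
    nlinarith
  have h3 : Real.exp (-(phi N * N) ^ 2 / 2) / (phi N * N) ≤
      Real.exp 2 / N / (√(2 * Real.log N) / 2) := by gcongr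
  have h4 : N * (2 * (Real.exp 2 / N / (√(2 * Real.log N) / 2))) =
      4 * Real.exp 2 / √(2 * Real.log N) := by
    field_simp
    ring
  rw [← h4]
  gcongr

theorem stmt18 :
    (∀ δ : ℝ, 0 < δ → δ < 1 →
      Filter.Tendsto (fun N : ℕ => Psync (δ * phi N) N) Filter.atTop (nhds 0)) ∧
    (∀ δ : ℝ, 2 ≤ δ →
      Filter.Tendsto (fun N : ℕ => Psync (δ * phi N) N) Filter.atTop (nhds 1)) ∧
    (∀ γ : ℝ, 0 < γ →
      Filter.Tendsto (fun N : ℕ => Psync (γ / N) N) Filter.atTop (nhds 0)) := by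
  refine ⟨fun δ h0 h1 => ?_, fun δ hδ => ?_, fun γ hγ => ?_⟩
  · refine tendsto_Psync_zero h0 h1 (fun N => mul_nonneg h0.le (phi_nonneg N))
      (Filter.Eventually.of_forall fun N => ?_)
    rw [mul_assoc]
    exact mul_le_mul_of_nonneg_left (phi_mul_le N) h0.le
  · have hlim := (tendsto_sqrt_two_log_atTop.const_div_atTop (4 * Real.exp 2)).const_sub 1
    rw [sub_zero] at hlim
    refine tendsto_of_tendsto_of_tendsto_of_le_of_le' hlim tendsto_const_nhds ?_
      (Filter.Eventually.of_forall fun N => Psync_le_one _ _)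
    filter_upwards [Filter.eventually_ge_atTop 2] with N hN using Psync_phi_ge hN hδ
  · refine tendsto_Psync_zero (δ := 1 / 2) (by norm_num) (by norm_num)
      (fun N => by positivity) ?_
    filter_upwards [tendsto_sqrt_two_log_atTop.eventually_ge_atTop (2 * γ),
      Filter.eventually_gt_atTop 0] with N h hN
    have hN' : (N : ℝ) ≠ 0 := by exact_mod_cast hN.ne'
    rw [div_mul_cancel₀ _ hN']
    linarith
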